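/- arXiv:math/0511018 — 2 statements merged into one kernel-verified Lean document; each statement's English description precedes it below -/
import Mathlib

section
/- Let U ⊆ ℂⁿ be open, ρ : U → ℝ a C² function, K > 0, s ∈ (0,1), and set r(z) := e^{−K|z|²} ρ(z). Then for every z ∈ U with ρ(z) < 0 and every (0,q)-coefficient system u (1 ≤ q ≤ n): i∂∂̄(−(−r)^s)(u,u)(z) = s(−ρ(z))^{s−2} e^{−sK|z|²} · { K ρ(z)² [ q|u|² − sK Σ'_{|J|=q−1} |Σ_{k=1}^n conj(z_k) u_{kJ}|² ] − ρ(z) [ i∂∂̄ρ(u,u)(z) − 2sK Re( Σ'_{|J|=q−1} Σ_{k,l=1}^n z_k conj(u_{kJ}) (∂ρ/∂z_l)(z) u_{lJ} ) ] + (1−s) Σ'_{|J|=q−1} |Σ_{k=1}^n (∂ρ/∂z_k)(z) u_{kJ}|² }. -/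
open scoped BigOperators
open MeasureTheory

namespace HM

/-- The finset of strictly increasing multi-indices of length `q` with entries in `Fin n`. -/
def Incr (n q : ℕ) : Finset (Fin q → Fin n) :=
  Finset.univ.filter (fun I => ∀ a b : Fin q, a < b → I a < I b)

/-- Prepend the index `k` to a `(q-1)`-tuple `J`, giving the `q`-tuple `kJ`. -/
def cons' {n : ℕ} (q : ℕ) (k : Fin n) (J : Fin (q - 1) → Fin n) : Fin q → Fin n :=
  fun i => if h : (i : ℕ) = 0 then k else J ⟨(i : ℕ) - 1, by have := i.isLt; omega⟩

/-- A (0,q)-coefficient system: an antisymmetric assignment of complex numbers to q-tuples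
(hence vanishing on tuples with a repeated index). -/
def IsCoeff {n q : ℕ} (u : (Fin q → Fin n) → ℂ) : Prop :=
  ∀ (σ : Equiv.Perm (Fin q)) (I : Fin q → Fin n),
    u (I ∘ σ) = ((Equiv.Perm.sign σ : ℤ) : ℂ) * u I

/-- `|u|²`, the sum of `|u_I|²` over strictly increasing multi-indices `I`. -/
noncomputable def nSq {n q : ℕ} (u : (Fin q → Fin n) → ℂ) : ℝ :=
  ∑ I ∈ Incr n q, ‖u I‖ ^ 2

/-- The Hessian form of a matrix `H` on coefficient systems:
`H(u,v) = Σ'_{|J|=q-1} Σ_{k,l} H_{lk} u_{lJ} conj(v_{kJ})`. -/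
noncomputable def mForm {n : ℕ} (q : ℕ) (H : Matrix (Fin n) (Fin n) ℂ)
    (u v : (Fin q → Fin n) → ℂ) : ℂ :=
  ∑ J ∈ Incr n (q - 1), ∑ k : Fin n, ∑ l : Fin n,
    H l k * u (cons' q l J) * star (v (cons' q k J))

/-- `σ^I_J`: the sign of the permutation rearranging `I` into `J`; `0` if `J` is not a
rearrangement of `I` (in particular `0` if `I` has a repeated entry). -/
def permSign {n p : ℕ} (I J : Fin p → Fin n) : ℤ :=
  if Function.Injective I then
    ∑ π : Equiv.Perm (Fin p), if J = I ∘ π then ((Equiv.Perm.sign π : ℤ)) else 0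
  else 0

/-- The Wirtinger derivative `∂f/∂z_k` of a complex-valued function, via real Fréchet
derivatives: `½(∂f/∂x_k − i ∂f/∂y_k)`. -/
noncomputable def dz {n : ℕ} (f : (Fin n → ℂ) → ℂ) (k : Fin n) (z : Fin n → ℂ) : ℂ :=
  (1/2 : ℂ) * (fderiv ℝ f z (Pi.single k 1) - Complex.I * fderiv ℝ f z (Pi.single k Complex.I))

/-- The Wirtinger derivative `∂f/∂z̄_k`: `½(∂f/∂x_k + i ∂f/∂y_k)`. -/
noncomputable def dzbar {n : ℕ} (f : (Fin n → ℂ) → ℂ) (k : Fin n) (z : Fin n → ℂ) : ℂ :=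
  (1/2 : ℂ) * (fderiv ℝ f z (Pi.single k 1) + Complex.I * fderiv ℝ f z (Pi.single k Complex.I))

/-- The mixed Wirtinger Hessian `∂²f/∂z_l∂z̄_k` of a real-valued function. -/
noncomputable def hessW {n : ℕ} (f : (Fin n → ℂ) → ℝ) (l k : Fin n) (z : Fin n → ℂ) : ℂ :=
  dz (fun w => dzbar (fun y => (f y : ℂ)) k w) l z

/-- The Hessian form `i∂∂̄f(u,u)(z) = Σ'_{|J|=q-1} Σ_{k,l} ∂²f/∂z_l∂z̄_k(z) u_{lJ} conj(u_{kJ})`. -/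
noncomputable def hForm {n : ℕ} (q : ℕ) (f : (Fin n → ℂ) → ℝ)
    (u : (Fin q → Fin n) → ℂ) (z : Fin n → ℂ) : ℂ :=
  ∑ J ∈ Incr n (q - 1), ∑ k : Fin n, ∑ l : Fin n,
    hessW f l k z * u (cons' q l J) * star (u (cons' q k J))

/-- Coefficient of `∂̄u` on the `(q+1)`-tuple `M`:
`(∂̄u)_M = Σ_k Σ'_{|J|=q} σ^{kJ}_M ∂u_J/∂z̄_k`. -/
noncomputable def dbarC {n : ℕ} (q : ℕ) (u : (Fin q → Fin n) → (Fin n → ℂ) → ℂ)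
    (M : Fin (q + 1) → Fin n) (z : Fin n → ℂ) : ℂ :=
  ∑ k : Fin n, ∑ J ∈ Incr n q, ((permSign (cons' (q + 1) k J) M : ℤ) : ℂ) * dzbar (u J) k z

/-- Coefficient of `ϑu` on the `(q-1)`-tuple `J`: `(ϑu)_J = −Σ_l ∂u_{lJ}/∂z_l`. -/
noncomputable def thetaC {n : ℕ} (q : ℕ) (u : (Fin q → Fin n) → (Fin n → ℂ) → ℂ)
    (J : Fin (q - 1) → Fin n) (z : Fin n → ℂ) : ℂ :=
  -∑ l : Fin n, dz (u (cons' q l J)) l z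

/-- Pointwise `|∂̄u|²`. -/
noncomputable def dbarSq {n : ℕ} (q : ℕ) (u : (Fin q → Fin n) → (Fin n → ℂ) → ℂ)
    (z : Fin n → ℂ) : ℝ :=
  ∑ M ∈ Incr n (q + 1), ‖dbarC q u M z‖ ^ 2

/-- Pointwise `|ϑu|²`. -/
noncomputable def thetaSq {n : ℕ} (q : ℕ) (u : (Fin q → Fin n) → (Fin n → ℂ) → ℂ)
    (z : Fin n → ℂ) : ℝ :=
  ∑ J ∈ Incr n (q - 1), ‖thetaC q u J z‖ ^ 2

/-- Remove the `i`-th entry of a `j`-tuple, giving a `(j-1)`-tuple. -/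
def removeIdx {n j : ℕ} (I : Fin j → Fin n) (i : Fin j) : Fin (j - 1) → Fin n :=
  fun t => if (t : ℕ) < (i : ℕ) then I ⟨t, by have := t.isLt; omega⟩
    else I ⟨(t : ℕ) + 1, by have := t.isLt; omega⟩

/-- The increasing `j`-tuple listing a finset `S` (with default `d` out of range). -/
def sortedTuple {n : ℕ} (j : ℕ) (S : Finset (Fin n)) (d : Fin n) : Fin j → Fin n :=
  fun t => (S.sort (· ≤ ·)).getD t d

end HM

namespace HM

theorem norm_coeff_comp {n q : ℕ} {u : (Fin q → Fin n) → ℂ} (hu : IsCoeff u)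
    (σ : Equiv.Perm (Fin q)) (I : Fin q → Fin n) : ‖u (I ∘ σ)‖ = ‖u I‖ := by
  rw [hu σ I, norm_mul]
  rcases Int.units_eq_one_or (Equiv.Perm.sign σ) with h | h <;> simp [h]

theorem coeff_eq_zero {n q : ℕ} {u : (Fin q → Fin n) → ℂ} (hu : IsCoeff u)
    (I : Fin q → Fin n) (a b : Fin q) (hab : a ≠ b) (h : I a = I b) : u I = 0 := by
  have h1 := hu (Equiv.swap a b) I
  have h2 : I ∘ (Equiv.swap a b) = I := by
    funext x
    simp only [Function.comp_apply, Equiv.swap_apply_def]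
    split_ifs with h3 h4
    · rw [h3, h]
    · rw [h4, h]
    · rfl
  rw [h2, Equiv.Perm.sign_swap hab] at h1
  have h3 : u I = - u I := by simpa using h1
  linear_combination h3 / 2

theorem mem_Incr {n q : ℕ} (I : Fin q → Fin n) : I ∈ Incr n q ↔ StrictMono I := by
  simp only [Incr, Finset.mem_filter, Finset.mem_univ, true_and]
  exact ⟨fun h a b hab => h a b hab, fun h a b hab => h hab⟩

theorem cons'_eq {n m : ℕ} (k : Fin n) (J : Fin m → Fin n) :
    cons' (m + 1) k J = (Fin.cons k J : Fin (m + 1) → Fin n) := by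
  funext i
  refine Fin.cases ?_ (fun j => ?_) i
  · simp [cons']
  · simp [cons']

theorem strictMono_eq {n m : ℕ} {I J : Fin m → Fin n} (hI : StrictMono I) (hJ : StrictMono J)
    (h : Set.range I = Set.range J) : I = J :=
  (StrictMono.range_inj hI hJ).1 h

theorem range_decomp {n m : ℕ} (I : Fin (m + 1) → Fin n) (hI : Function.Injective I)
    (i : Fin (m + 1)) : Set.range (I ∘ i.succAbove) = Set.range I \ {I i} := by
  rw [Set.range_comp, Fin.range_succAbove, ← Set.image_singleton, ← Set.image_univ,
    ← Set.image_sdiff hI, Set.compl_eq_univ_sdiff]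

theorem comb_succ {n m : ℕ} {u : (Fin (m + 1) → Fin n) → ℂ} (hu : IsCoeff u) :
    ∑ J ∈ Incr n m, ∑ k : Fin n, ‖u (cons' (m + 1) k J)‖ ^ 2
      = ((m + 1 : ℕ) : ℝ) * nSq u := by
  have hR : ((m + 1 : ℕ) : ℝ) * nSq u
      = ∑ p ∈ Incr n (m + 1) ×ˢ (Finset.univ : Finset (Fin (m + 1))), ‖u p.1‖ ^ 2 := by
    rw [Finset.sum_product, nSq, Finset.mul_sum]
    simp
  rw [hR, ← Finset.sum_product']
  symm
  have hcons : ∀ (I : Fin (m + 1) → Fin n) (i : Fin (m + 1)),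
      ∃ σ : Equiv.Perm (Fin (m + 1)), I ∘ σ = cons' (m + 1) (I i) (I ∘ i.succAbove) := by
    intro I i
    have hinj : Function.Injective (Fin.cons i i.succAbove : Fin (m + 1) → Fin (m + 1)) := by
      rw [Fin.cons_injective_iff]
      exact ⟨by simp, Fin.succAbove_right_injective⟩
    refine ⟨Equiv.ofBijective _ (Finite.injective_iff_bijective.1 hinj), ?_⟩
    rw [cons'_eq]
    funext x
    refine Fin.cases ?_ (fun j => ?_) x <;> simp
  refine Finset.sum_of_injOn (fun p => (p.1 ∘ p.2.succAbove, p.1 p.2)) ?_ ?_ ?_ ?_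
  · rintro ⟨I, i⟩ h ⟨I', i'⟩ h' heq
    simp only [Finset.coe_product, Set.mem_prod, Finset.mem_coe, mem_Incr] at h h'
    simp only [Prod.mk.injEq] at heq
    have hr : Set.range I = Set.range I' := by
      have h1 := range_decomp I h.1.injective i
      have h2 := range_decomp I' h'.1.injective i'
      rw [heq.1, h2, heq.2] at h1
      have e1 : Set.range I = insert (I' i') (Set.range I \ {I' i'}) := by
        rw [Set.insert_sdiff_singleton, Set.insert_eq_of_mem]
        exact ⟨i, heq.2⟩
      have e2 : Set.range I' = insert (I' i') (Set.range I' \ {I' i'}) := by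
        rw [Set.insert_sdiff_singleton, Set.insert_eq_of_mem]
        exact ⟨i', rfl⟩
      rw [e1, e2, h1]
    have hI := strictMono_eq h.1 h'.1 hr
    subst hI
    rw [h.1.injective heq.2]
  · rintro ⟨I, i⟩ h
    simp only [Finset.coe_product, Set.mem_prod, Finset.mem_coe, mem_Incr] at h ⊢
    exact ⟨h.1.comp (Fin.strictMono_succAbove i), Finset.mem_univ _⟩
  · rintro ⟨J, k⟩ hJ hne
    simp only [Finset.mem_product, mem_Incr] at hJ
    have hJ := hJ.1
    by_cases hk : k ∈ Set.range J
    · obtain ⟨j, hj⟩ := hk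
      have : u (cons' (m + 1) k J) = 0 := by
        rw [cons'_eq]
        exact coeff_eq_zero hu _ 0 j.succ (Fin.succ_ne_zero j).symm (by simp [hj])
      simp [this]
    · exfalso
      apply hne
      have hinj : Function.Injective (Fin.cons k J : Fin (m + 1) → Fin n) :=
        Fin.cons_injective_iff.2 ⟨hk, hJ.injective⟩
      set c : Fin (m + 1) → Fin n := Fin.cons k J with hc
      have hmono : StrictMono (c ∘ Tuple.sort c) :=
        (Tuple.monotone_sort c).strictMono_of_injective (hinj.comp (Tuple.sort c).injective)
      refine ⟨(c ∘ Tuple.sort c, (Tuple.sort c).symm 0), ?_, ?_⟩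
      · simp only [Finset.coe_product, Set.mem_prod, Finset.mem_coe, mem_Incr]
        exact ⟨hmono, Finset.mem_univ _⟩
      · have h0 : (c ∘ Tuple.sort c) ((Tuple.sort c).symm 0) = k := by simp [hc]
        simp only [Prod.mk.injEq]
        refine ⟨?_, h0⟩
        apply strictMono_eq (hmono.comp (Fin.strictMono_succAbove _)) hJ
        rw [range_decomp _ hmono.injective, h0, Set.range_comp, (Tuple.sort c).surjective.range_eq,
          Set.image_univ, hc, Fin.range_cons]
        exact Set.insert_sdiff_self_of_notMem hk
  · rintro ⟨I, i⟩ h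
    obtain ⟨σ, hσ⟩ := hcons I i
    simp only
    rw [← hσ, norm_coeff_comp hu]

theorem comb {n q : ℕ} (hq : 1 ≤ q) {u : (Fin q → Fin n) → ℂ} (hu : IsCoeff u) :
    ∑ J ∈ Incr n (q - 1), ∑ k : Fin n, ‖u (cons' q k J)‖ ^ 2 = (q : ℝ) * nSq u := by
  obtain ⟨m, rfl⟩ : ∃ m, q = m + 1 := ⟨q - 1, by omega⟩
  exact comb_succ hu

end HM

namespace HM

theorem dz_congr {n : ℕ} {f g : (Fin n → ℂ) → ℂ} {z : Fin n → ℂ} (h : f =ᶠ[nhds z] g)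
    (k : Fin n) : dz f k z = dz g k z := by
  unfold dz; rw [h.fderiv_eq]

theorem dz_mul {n : ℕ} {f g : (Fin n → ℂ) → ℂ} {z : Fin n → ℂ}
    (hf : DifferentiableAt ℝ f z) (hg : DifferentiableAt ℝ g z) (k : Fin n) :
    dz (fun w => f w * g w) k z = f z * dz g k z + g z * dz f k z := by
  unfold dz
  rw [fderiv_fun_mul hf hg]
  simp only [_root_.add_apply, _root_.smul_apply, smul_eq_mul]
  ring

theorem dz_sub {n : ℕ} {f g : (Fin n → ℂ) → ℂ} {z : Fin n → ℂ}
    (hf : DifferentiableAt ℝ f z) (hg : DifferentiableAt ℝ g z) (k : Fin n) :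
    dz (fun w => f w - g w) k z = dz f k z - dz g k z := by
  unfold dz
  rw [fderiv_fun_sub hf hg]
  simp only [_root_.sub_apply]
  ring

theorem dz_const_mul {n : ℕ} {g : (Fin n → ℂ) → ℂ} {z : Fin n → ℂ} (c : ℂ)
    (hg : DifferentiableAt ℝ g z) (k : Fin n) :
    dz (fun w => c * g w) k z = c * dz g k z := by
  unfold dz
  rw [fderiv_const_mul hg]
  simp only [_root_.smul_apply, smul_eq_mul]
  ring

theorem dz_coord {n : ℕ} (k l : Fin n) (z : Fin n → ℂ) :
    dz (fun w => w k) l z = if l = k then 1 else 0 := by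
  unfold dz
  have h : fderiv ℝ (fun w : Fin n → ℂ => w k) z = ContinuousLinearMap.proj (R := ℝ) k :=
    (ContinuousLinearMap.proj (R := ℝ) (φ := fun _ : Fin n => ℂ) k).fderiv
  rw [h]
  simp only [ContinuousLinearMap.proj_apply]
  by_cases hlk : l = k
  · subst hlk
    simp
    norm_num
  · simp [hlk]

theorem fderiv_ofReal {n : ℕ} {f : (Fin n → ℂ) → ℝ} {z : Fin n → ℂ}
    {L : (Fin n → ℂ) →L[ℝ] ℝ} (h : HasFDerivAt f L z) (v : Fin n → ℂ) :
    fderiv ℝ (fun w => (f w : ℂ)) z v = ((L v : ℝ) : ℂ) := by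
  have := (Complex.ofRealCLM.hasFDerivAt (x := f z)).comp z h
  have h2 : HasFDerivAt (fun w => (f w : ℂ)) (Complex.ofRealCLM.comp L) z := this
  rw [h2.fderiv]; rfl

theorem dz_ofReal {n : ℕ} {f : (Fin n → ℂ) → ℝ} {z : Fin n → ℂ}
    {L : (Fin n → ℂ) →L[ℝ] ℝ} (h : HasFDerivAt f L z) (k : Fin n) :
    dz (fun w => (f w : ℂ)) k z
      = (1/2 : ℂ) * (((L (Pi.single k 1) : ℝ) : ℂ)
          - Complex.I * ((L (Pi.single k Complex.I) : ℝ) : ℂ)) := by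
  unfold dz; rw [fderiv_ofReal h, fderiv_ofReal h]

theorem dzbar_ofReal {n : ℕ} {f : (Fin n → ℂ) → ℝ} {z : Fin n → ℂ}
    {L : (Fin n → ℂ) →L[ℝ] ℝ} (h : HasFDerivAt f L z) (k : Fin n) :
    dzbar (fun w => (f w : ℂ)) k z
      = (1/2 : ℂ) * (((L (Pi.single k 1) : ℝ) : ℂ)
          + Complex.I * ((L (Pi.single k Complex.I) : ℝ) : ℂ)) := by
  unfold dzbar; rw [fderiv_ofReal h, fderiv_ofReal h]

theorem dzbar_eq_conj {n : ℕ} {f : (Fin n → ℂ) → ℝ} {z : Fin n → ℂ}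
    (h : DifferentiableAt ℝ f z) (k : Fin n) :
    dzbar (fun w => (f w : ℂ)) k z = star (dz (fun w => (f w : ℂ)) k z) := by
  rw [dz_ofReal h.hasFDerivAt, dzbar_ofReal h.hasFDerivAt]
  simp

/-- derivative of `∑ ‖w k‖²` -/
noncomputable def nL {n : ℕ} (z : Fin n → ℂ) : (Fin n → ℂ) →L[ℝ] ℝ :=
  ∑ k : Fin n, (2 • (innerSL ℝ (z k))).comp (ContinuousLinearMap.proj (R := ℝ) k)

theorem hasFDerivAt_nsq {n : ℕ} (z : Fin n → ℂ) :
    HasFDerivAt (fun w : Fin n → ℂ => ∑ k : Fin n, ‖w k‖ ^ 2) (nL z) z := by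
  unfold nL
  apply HasFDerivAt.fun_sum
  intro k _
  have h1 : HasFDerivAt (fun w : Fin n → ℂ => w k) (ContinuousLinearMap.proj (R := ℝ) k) z :=
    (ContinuousLinearMap.proj (R := ℝ) (φ := fun _ : Fin n => ℂ) k).hasFDerivAt
  exact h1.norm_sq

theorem nL_apply {n : ℕ} (z : Fin n → ℂ) (k : Fin n) (c : ℂ) :
    nL z (Pi.single k c) = 2 * ((z k).re * c.re + (z k).im * c.im) := by
  unfold nL
  simp only [_root_.sum_apply, ContinuousLinearMap.comp_apply,
    ContinuousLinearMap.proj_apply]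
  rw [Finset.sum_eq_single k]
  · simp [Complex.inner]
    ring
  · intro j _ hj
    simp [Pi.single_eq_of_ne hj]
  · simp

/-- the main function -/
noncomputable def mF {n : ℕ} (ρ : (Fin n → ℂ) → ℝ) (K s : ℝ) (w : Fin n → ℂ) : ℝ :=
  -((-(Real.exp (-K * ∑ k : Fin n, ‖w k‖ ^ 2) * ρ w)) ^ s)

theorem hasFDerivAt_mF {n : ℕ} {ρ : (Fin n → ℂ) → ℝ} {L : (Fin n → ℂ) →L[ℝ] ℝ} (K s : ℝ)
    {z : Fin n → ℂ} (h : HasFDerivAt ρ L z) (hz : ρ z < 0) :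
    HasFDerivAt (mF ρ K s) (mF ρ K s z • ((s / ρ z) • L - (s * K) • nL z)) z := by
  have hE := ((hasFDerivAt_nsq z).const_mul (-K)).exp
  have hpos : 0 < -(Real.exp (-K * ∑ k : Fin n, ‖z k‖ ^ 2) * ρ z) := by
    have := Real.exp_pos (-K * ∑ k : Fin n, ‖z k‖ ^ 2)
    nlinarith
  have h2 := (((hE.mul h).neg).rpow_const (p := s) (Or.inl hpos.ne')).neg
  refine HasFDerivAt.congr_fderiv h2 ?_
  ext v
  have hne := hz.ne
  have hEne := (Real.exp_pos (-K * ∑ k : Fin n, ‖z k‖ ^ 2)).ne'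
  simp only [mF, Pi.neg_apply, Pi.mul_apply, _root_.neg_apply, _root_.add_apply, _root_.sub_apply,
    _root_.smul_apply, smul_eq_mul]
  rw [Real.rpow_sub_one hpos.ne']
  field_simp
  ring

theorem dz_mF {n : ℕ} {ρ : (Fin n → ℂ) → ℝ} (K s : ℝ)
    {z : Fin n → ℂ} (h : DifferentiableAt ℝ ρ z) (hz : ρ z < 0) (k : Fin n) :
    dz (fun w => (mF ρ K s w : ℂ)) k z
      = mF ρ K s z * (s * (dz (fun w => (ρ w : ℂ)) k z * ((ρ z)⁻¹ : ℂ)) - s * K * star (z k)) := by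
  rw [dz_ofReal (hasFDerivAt_mF K s h.hasFDerivAt hz), dz_ofReal h.hasFDerivAt]
  have : star (z k) = (z k).re - (z k).im * Complex.I := by
    apply Complex.ext <;> simp
  rw [this]
  simp only [_root_.sub_apply, _root_.smul_apply, smul_eq_mul, nL_apply]
  push_cast
  simp
  ring

theorem dzbar_mF {n : ℕ} {ρ : (Fin n → ℂ) → ℝ} (K s : ℝ)
    {z : Fin n → ℂ} (h : DifferentiableAt ℝ ρ z) (hz : ρ z < 0) (k : Fin n) :
    dzbar (fun w => (mF ρ K s w : ℂ)) k z
      = mF ρ K s z * (s * (dzbar (fun w => (ρ w : ℂ)) k z * ((ρ z)⁻¹ : ℂ)) - s * K * z k) := by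
  rw [dzbar_eq_conj (hasFDerivAt_mF K s h.hasFDerivAt hz).differentiableAt, dz_mF K s h hz,
    dzbar_eq_conj h]
  simp

theorem dz_inv {n : ℕ} {ρ : (Fin n → ℂ) → ℝ}
    {z : Fin n → ℂ} (h : DifferentiableAt ℝ ρ z) (hz : ρ z < 0) (k : Fin n) :
    dz (fun w => ((ρ w)⁻¹ : ℂ)) k z
      = - dz (fun w => (ρ w : ℂ)) k z * ((ρ z)⁻¹ : ℂ) ^ 2 := by
  have e : (fun w => ((ρ w)⁻¹ : ℂ)) = fun w => (((ρ w)⁻¹ : ℝ) : ℂ) := by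
    funext w; push_cast; rfl
  have h3 := (hasDerivAt_inv hz.ne).comp_hasFDerivAt z h.hasFDerivAt
  have h4 : HasFDerivAt (fun w => (ρ w)⁻¹) (-(ρ z ^ 2)⁻¹ • fderiv ℝ ρ z) z := h3
  rw [e, dz_ofReal h4, dz_ofReal h.hasFDerivAt]
  simp only [_root_.smul_apply, smul_eq_mul]
  push_cast
  ring

theorem hessW_mF {n : ℕ} {ρ : (Fin n → ℂ) → ℝ} (K s : ℝ)
    {z : Fin n → ℂ} (h : ContDiffAt ℝ 2 ρ z) (hz : ρ z < 0) (l k : Fin n) :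
    hessW (mF ρ K s) l k z
      = mF ρ K s z * ((s * (dz (fun w => (ρ w : ℂ)) l z * ((ρ z)⁻¹ : ℂ)) - s * K * star (z l))
         * (s * (star (dz (fun w => (ρ w : ℂ)) k z) * ((ρ z)⁻¹ : ℂ)) - s * K * z k)
        + s * (hessW ρ l k z * ((ρ z)⁻¹ : ℂ)
           - dz (fun w => (ρ w : ℂ)) l z * star (dz (fun w => (ρ w : ℂ)) k z)
              * ((ρ z)⁻¹ : ℂ) ^ 2)
        - s * K * (if l = k then 1 else 0)) := by
  have hd : DifferentiableAt ℝ ρ z := h.differentiableAt (by norm_num)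
  have hev : ∀ᶠ w in nhds z, DifferentiableAt ℝ ρ w := by
    filter_upwards [h.eventually (by simp)] with w hw
    exact hw.differentiableAt (by norm_num)
  have hneg : ∀ᶠ w in nhds z, ρ w < 0 := hd.continuousAt.eventually_lt_const hz
  have hF : (fun w => dzbar (fun y => (mF ρ K s y : ℂ)) k w) =ᶠ[nhds z] fun w =>
      (mF ρ K s w : ℂ) *
        (s * (dzbar (fun w => (ρ w : ℂ)) k w * ((ρ w)⁻¹ : ℂ)) - s * K * w k) := by
    filter_upwards [hev, hneg] with w h1 h2
    exact dzbar_mF K s h1 h2 k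
  have hC : ContDiffAt ℝ 2 (fun w => (ρ w : ℂ)) z :=
    Complex.ofRealCLM.contDiff.contDiffAt.comp z h
  have hfd : DifferentiableAt ℝ (fderiv ℝ (fun w => (ρ w : ℂ))) z :=
    (hC.fderiv_right (m := 1) (by norm_num)).differentiableAt (by norm_num)
  have hdb : DifferentiableAt ℝ (fun w => dzbar (fun w => (ρ w : ℂ)) k w) z := by
    unfold dzbar
    fun_prop
  have hdc : DifferentiableAt ℝ (fun w => (ρ w : ℂ)) z := hC.differentiableAt (by norm_num)
  have hinv : DifferentiableAt ℝ (fun w => ((ρ w)⁻¹ : ℂ)) z :=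
    hdc.inv (by exact_mod_cast hz.ne)
  have hmF : DifferentiableAt ℝ (fun w => (mF ρ K s w : ℂ)) z :=
    Complex.ofRealCLM.differentiableAt.comp z
      (hasFDerivAt_mF K s hd.hasFDerivAt hz).differentiableAt
  have hco : DifferentiableAt ℝ (fun w : Fin n → ℂ => w k) z := by fun_prop
  have hp := hdb.mul hinv
  have hp' : DifferentiableAt ℝ
    (fun w => dzbar (fun w => (ρ w : ℂ)) k w * ((ρ w)⁻¹ : ℂ)) z := hp
  have hq : DifferentiableAt ℝ (fun w => (s : ℂ) *
      (dzbar (fun w => (ρ w : ℂ)) k w * ((ρ w)⁻¹ : ℂ)) - s * K * w k) z :=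
    (hp'.const_mul _).sub (hco.const_mul _)
  unfold hessW
  rw [dz_congr hF, dz_mul hmF hq,
    dz_sub (hp'.const_mul _) (hco.const_mul _), dz_const_mul _ hp', dz_const_mul _ hco,
    dz_mul hdb hinv, dz_coord, dz_inv hd hz, dz_mF K s hd hz, dzbar_eq_conj hd]
  ring

end HM

namespace HM

theorem algJ {n : ℕ} (C K R s : ℂ) (v a x : Fin n → ℂ) (H : Fin n → Fin n → ℂ) :
    ∑ k, ∑ l, (C * (K * R ^ 2 * ((if l = k then 1 else 0) - s * K * (star (x l) * x k))
        - R * (H l k - s * K * (a l * x k + star (a k) * star (x l)))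
        + (1 - s) * (a l * star (a k)))) * v l * star (v k)
      = C * (K * R ^ 2 * (∑ k, v k * star (v k)
            - s * K * ((∑ k, star (x k) * v k) * star (∑ k, star (x k) * v k)))
          - R * (∑ k, ∑ l, H l k * v l * star (v k)
            - s * K * ((∑ k, a k * v k) * star (∑ k, star (x k) * v k)
              + star (∑ k, a k * v k) * (∑ k, star (x k) * v k)))
          + (1 - s) * ((∑ k, a k * v k) * star (∑ k, a k * v k))) := by
  have h1 : ∀ f g : Fin n → ℂ, (∑ k, f k) * star (∑ k, g k)
      = ∑ k, ∑ l, f l * star (g k) := by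
    intro f g
    rw [star_sum, Finset.sum_mul_sum, Finset.sum_comm]
  have h2 : ∑ k, v k * star (v k)
      = ∑ k, ∑ l, (if l = k then (1 : ℂ) else 0) * v l * star (v k) := by
    refine Finset.sum_congr rfl fun k _ => ?_
    simp
  rw [h2, mul_comm (star (∑ k, a k * v k)), h1, h1, h1, h1]
  simp only [Finset.mul_sum, ← Finset.sum_add_distrib, ← Finset.sum_sub_distrib]
  refine Finset.sum_congr rfl fun k _ => Finset.sum_congr rfl fun l _ => ?_
  simp only [star_mul', star_star]
  ring

theorem mF_eq {n : ℕ} {ρ : (Fin n → ℂ) → ℝ} (K s : ℝ) {z : Fin n → ℂ} (hz : ρ z < 0) :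
    mF ρ K s z = -((-(ρ z)) ^ (s - 2) *
      Real.exp (-(s * K) * ∑ k : Fin n, ‖z k‖ ^ 2) * ρ z ^ 2) := by
  have hp : 0 < -ρ z := by linarith
  unfold mF
  rw [← mul_neg, Real.mul_rpow (Real.exp_pos _).le hp.le, ← Real.exp_mul]
  have : (-ρ z) ^ s = (-ρ z) ^ (s - 2) * ρ z ^ 2 := by
    rw [← neg_sq (ρ z), ← Real.rpow_natCast (-ρ z) 2, ← Real.rpow_add hp]
    norm_num
  rw [this]
  ring_nf

theorem norm_sq_eq (w : ℂ) : (((‖w‖ ^ 2 : ℝ)) : ℂ) = w * star w := by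
  rw [Complex.star_def, Complex.mul_conj, Complex.normSq_eq_norm_sq]

theorem two_re (w : ℂ) : (2 : ℂ) * ((w.re : ℝ) : ℂ) = w + star w := by
  rw [Complex.star_def, Complex.add_conj]; push_cast; rfl

end HM

/-- the explicit Hessian computation for `r = e^{−K|z|²}ρ` from the proof
of Lemma 3.2. -/
theorem hessian_of_weighted_power (n : ℕ) (hn : 1 ≤ n)
    (U : Set (Fin n → ℂ)) (hU : IsOpen U)
    (ρ : (Fin n → ℂ) → ℝ) (hρ : ContDiffOn ℝ 2 ρ U)
    (K : ℝ) (hK : 0 < K) (s : ℝ) (hs : s ∈ Set.Ioo (0 : ℝ) 1)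
    (r : (Fin n → ℂ) → ℝ)
    (hr : ∀ w, r w = Real.exp (-K * ∑ k : Fin n, ‖w k‖ ^ 2) * ρ w) :
    ∀ z ∈ U, ρ z < 0 →
      ∀ q : ℕ, 1 ≤ q → q ≤ n → ∀ u : (Fin q → Fin n) → ℂ, HM.IsCoeff u →
        HM.hForm q (fun w => -((-(r w)) ^ s)) u z
          = ((s * (-(ρ z)) ^ (s - 2) *
                Real.exp (-(s * K) * ∑ k : Fin n, ‖z k‖ ^ 2) : ℝ) : ℂ) *
              (((K * ρ z ^ 2 : ℝ) : ℂ) *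
                  ((q : ℂ) * ((HM.nSq u : ℝ) : ℂ)
                    - ((s * K : ℝ) : ℂ) * ((∑ J ∈ HM.Incr n (q - 1),
                        ‖∑ k : Fin n, (starRingEnd ℂ) (z k) *
                          u (HM.cons' q k J)‖ ^ 2 : ℝ) : ℂ))
                - ((ρ z : ℝ) : ℂ) *
                    (HM.hForm q ρ u z
                      - ((2 * (s * K) : ℝ) : ℂ) *
                          (((∑ J ∈ HM.Incr n (q - 1), ∑ k : Fin n, ∑ l : Fin n,
                              z k * star (u (HM.cons' q k J)) *
                                HM.dz (fun w => ((ρ w : ℝ) : ℂ)) l z *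
                                u (HM.cons' q l J)).re : ℝ) : ℂ))
                + (((1 - s) : ℝ) : ℂ) * ((∑ J ∈ HM.Incr n (q - 1),
                    ‖∑ k : Fin n, HM.dz (fun w => ((ρ w : ℝ) : ℂ)) k z *
                      u (HM.cons' q k J)‖ ^ 2 : ℝ) : ℂ)) := by
  intro z hzU hz q hq hqn u hu
  have hfun : (fun w => -((-(r w)) ^ s)) = HM.mF ρ K s := by
    funext w
    rw [hr w]; rfl
  have hC : ContDiffAt ℝ 2 ρ z := hρ.contDiffAt (hU.mem_nhds hzU)
  have hne : ((ρ z : ℝ) : ℂ) ≠ 0 := by exact_mod_cast hz.ne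
  rw [hfun]
  set C : ℝ := s * (-(ρ z)) ^ (s - 2) *
                Real.exp (-(s * K) * ∑ k : Fin n, ‖z k‖ ^ 2) with hCdef
  have hmF : (s : ℂ) * ((HM.mF ρ K s z : ℝ) : ℂ) = -((C : ℂ) * (ρ z : ℂ) ^ 2) := by
    rw [HM.mF_eq K s hz, hCdef]
    push_cast
    ring
  set a : Fin n → ℂ := fun l => HM.dz (fun w => ((ρ w : ℝ) : ℂ)) l z with ha
  have hent : ∀ l k, HM.hessW (HM.mF ρ K s) l k z
      = (C : ℂ) * ((K : ℂ) * (ρ z : ℂ) ^ 2 *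
          ((if l = k then 1 else 0) - (s : ℂ) * K * (star (z l) * z k))
        - (ρ z : ℂ) * (HM.hessW ρ l k z
            - (s : ℂ) * K * (a l * z k + star (a k) * star (z l)))
        + (1 - (s : ℂ)) * (a l * star (a k))) := by
    intro l k
    rw [HM.hessW_mF K s hC hz]
    change _ * (((s : ℂ) * (a l * _) - _) * (s * (star (a k) * _) - _)
      + s * (_ - a l * star (a k) * _) - _) = _
    generalize (if l = k then (1 : ℂ) else 0) = δ
    generalize HM.hessW ρ l k z = H
    have key : ∀ X : ℂ, ((HM.mF ρ K s z : ℝ) : ℂ) * (s * X) = -((C : ℂ) * (ρ z : ℂ) ^ 2) * X := by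
      intro X
      rw [← hmF]; ring
    have e : ∀ i : ℂ, (((s : ℂ) * (a l * i) - s * K * star (z l)) * (s * (star (a k) * i) - s * K * z k)
      + s * (H * i - a l * star (a k) * i ^ 2) - s * K * δ)
      = s * (s * (a l * i - K * star (z l)) * (star (a k) * i - K * z k)
        + (H * i - a l * star (a k) * i ^ 2) - K * δ) := by
      intro i
      ring
    rw [e, key]
    field_simp
    ring
  have hre := HM.two_re (∑ J ∈ HM.Incr n (q - 1), ∑ k : Fin n, ∑ l : Fin n,
                              z k * star (u (HM.cons' q k J)) *
                                HM.dz (fun w => ((ρ w : ℝ) : ℂ)) l z *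
                                u (HM.cons' q l J))
  have hT : ∑ J ∈ HM.Incr n (q - 1), ∑ k : Fin n, ∑ l : Fin n,
                              z k * star (u (HM.cons' q k J)) *
                                HM.dz (fun w => ((ρ w : ℝ) : ℂ)) l z *
                                u (HM.cons' q l J)
      = ∑ J ∈ HM.Incr n (q - 1), (∑ k, a k * u (HM.cons' q k J)) *
          star (∑ k, star (z k) * u (HM.cons' q k J)) := by
    refine Finset.sum_congr rfl fun J _ => ?_
    rw [star_sum, Finset.sum_mul_sum, Finset.sum_comm]
    refine Finset.sum_congr rfl fun k _ => Finset.sum_congr rfl fun l _ => ?_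
    simp only [star_mul', star_star, ha]
    ring
  rw [hT] at hre
  rw [hT]
  have hcomb : (q : ℂ) * ((HM.nSq u : ℝ) : ℂ)
      = ∑ J ∈ HM.Incr n (q - 1), ∑ k : Fin n,
          u (HM.cons' q k J) * star (u (HM.cons' q k J)) := by
    have h := congrArg (fun t : ℝ => (t : ℂ)) (HM.comb hq hu)
    simp only [Complex.ofReal_mul, Complex.ofReal_natCast] at h
    rw [← h, Complex.ofReal_sum]
    refine Finset.sum_congr rfl fun J _ => ?_
    rw [Complex.ofReal_sum]
    exact Finset.sum_congr rfl fun k _ => HM.norm_sq_eq _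
  have hre2 : ∀ X : ℝ, ((2 * (s * K) : ℝ) : ℂ) * (X : ℂ) = (s : ℂ) * K * (2 * (X : ℂ)) := by
    intro X
    push_cast
    ring
  rw [hre2, hre, hcomb]
  unfold HM.hForm
  simp only [hent]
  simp only [HM.algJ]
  rw [Complex.ofReal_sum, Complex.ofReal_sum]
  simp only [HM.norm_sq_eq]
  rw [star_sum, ← Finset.sum_add_distrib]
  simp only [Complex.ofReal_mul, Complex.ofReal_sub, Complex.ofReal_pow, Complex.ofReal_one]
  simp only [Finset.mul_sum (HM.Incr n (q - 1)), ← Finset.sum_add_distrib,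
    ← Finset.sum_sub_distrib]
  refine Finset.sum_congr rfl fun J _ => ?_
  simp only [star_mul', Complex.star_def, Complex.conj_conj, ha]
end

section
/- Let n ≥ 1 and 1 ≤ q ≤ n. Let v assign to each pair (k, M), where k ∈ {1,…,n} and M is a q-tuple of indices in {1,…,n}, a complex number v_{k,M}, antisymmetric under permutations of M (hence vanishing when M has a repeated index). Then Σ'_{|M|=q} Σ'_{|N|=q} Σ_{k,l=1}^n σ^{kM}_{lN} v_{k,M} · conj(v_{l,N}) = Σ'_{|M|=q} Σ_{k=1}^n |v_{k,M}|² − Σ'_{|J|=q−1} Σ_{k,l=1}^n v_{k,lJ} · conj(v_{l,kJ}), where kM denotes the (q+1)-tuple (k,M) and v_{k,lJ} denotes the value of v at (k, (l,J)). -/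
open scoped BigOperators
open MeasureTheory

namespace HMaux

open HM Equiv

/-- extension of a permutation fixing zero -/
def ext0 {q : ℕ} (σ : Perm (Fin q)) : Perm (Fin (q + 1)) := Perm.decomposeFin.symm (0, σ)

lemma ext0_zero {q : ℕ} (σ : Perm (Fin q)) : ext0 σ 0 = 0 := by simp [ext0]

lemma ext0_succ {q : ℕ} (σ : Perm (Fin q)) (i : Fin q) : ext0 σ i.succ = (σ i).succ := by
  simp [ext0]

lemma ext0_sign {q : ℕ} (σ : Perm (Fin q)) : Perm.sign (ext0 σ) = Perm.sign σ := by
  simp [ext0]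

lemma cons_comp {n q : ℕ} (σ : Perm (Fin q)) (k : Fin n) (M : Fin q → Fin n) :
    (Fin.cons k (M ∘ σ) : Fin (q + 1) → Fin n) = (Fin.cons k M : Fin (q + 1) → Fin n) ∘ ext0 σ := by
  funext i
  refine Fin.cases ?_ (fun i => ?_) i
  · simp [ext0_zero]
  · simp [ext0_succ]

lemma tail_comp {n q : ℕ} (σ : Perm (Fin q)) (I : Fin (q + 1) → Fin n) :
    Fin.tail (I ∘ ext0 σ) = Fin.tail I ∘ σ := by
  funext i
  simp [Fin.tail, ext0_succ]

lemma decomp {q : ℕ} (p : Fin (q + 1)) (e : Perm (Fin q)) :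
    Perm.decomposeFin.symm (p, e) = swap 0 p * ext0 e := by
  ext i
  refine Fin.cases ?_ (fun i => ?_) i
  · simp [ext0_zero]
  · simp [ext0_succ]

lemma cons'_eq {n q : ℕ} (k : Fin n) (J : Fin q → Fin n) :
    cons' (q + 1) k J = (Fin.cons k J : Fin (q + 1) → Fin n) := by
  funext i
  refine Fin.cases ?_ (fun i => ?_) i
  · simp [cons']
  · simp [cons']

lemma mem_Incr {n q : ℕ} {I : Fin q → Fin n} : I ∈ Incr n q ↔ StrictMono I := by
  simp [Incr, StrictMono]

lemma permSign_eq {n p : ℕ} (I J : Fin p → Fin n) :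
    permSign I J = ∑ π : Perm (Fin p), if J = I ∘ π then ((Perm.sign π : ℤ)) else 0 := by
  unfold permSign
  split_ifs with h
  · rfl
  · rw [Function.Injective] at h
    push Not at h
    obtain ⟨a, b, hab, hne⟩ := h
    have h1 : (Matrix.of (fun a b => if J b = I a then (1:ℤ) else 0)).det = 0 :=
      Matrix.det_zero_of_row_eq hne (by funext c; simp [hab])
    rw [Matrix.det_apply] at h1
    refine h1.symm.trans ?_
    refine Finset.sum_congr rfl fun π _ => ?_
    simp only [Matrix.of_apply, Fintype.prod_boole, funext_iff, Function.comp]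
    split_ifs <;> simp [Units.smul_def]

lemma sum_all {n q : ℕ} (f : (Fin q → Fin n) → ℂ)
    (hf : ∀ (σ : Perm (Fin q)) M, f (M ∘ σ) = f M)
    (h0 : ∀ M, ¬ Function.Injective M → f M = 0) :
    ∑ M, f M = (q.factorial : ℂ) * ∑ M ∈ Incr n q, f M := by
  have h1 : ∑ x ∈ Incr n q ×ˢ (Finset.univ : Finset (Perm (Fin q))), f (x.1 ∘ x.2)
      = ∑ M ∈ Finset.univ.filter (fun M : Fin q → Fin n => Function.Injective M), f M := by
    refine Finset.sum_bij (fun x _ => x.1 ∘ x.2) ?_ ?_ ?_ ?_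
    · rintro ⟨I, σ⟩ hx
      simp only [Finset.mem_product, mem_Incr, Finset.mem_univ, and_true] at hx
      simpa using hx.injective
    · rintro ⟨I, σ⟩ hx ⟨I', σ'⟩ hx' h
      simp only [Finset.mem_product, mem_Incr, Finset.mem_univ, and_true] at hx hx'
      simp only at h
      have hI : I = I' := by
        rw [← hx.range_inj hx', ← σ.surjective.range_comp I, h, σ'.surjective.range_comp I']
      subst hI
      have : σ = σ' := by
        ext i
        exact congrArg _ (hx.injective (congrFun h i))
      rw [this]
    · intro M hM
      simp only [Finset.mem_filter, Finset.mem_univ, true_and] at hM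
      refine ⟨(M ∘ Tuple.sort M, (Tuple.sort M)⁻¹), ?_, ?_⟩
      · simp only [Finset.mem_product, mem_Incr, Finset.mem_univ, and_true]
        exact (Tuple.monotone_sort M).strictMono_of_injective (hM.comp (Tuple.sort M).injective)
      · funext i
        simp
    · intros; rfl
  rw [Finset.sum_filter_of_ne (fun M _ h => by by_contra h'; exact h (h0 M h'))] at h1
  rw [← h1, Finset.sum_product, Finset.mul_sum]
  refine Finset.sum_congr rfl fun M _ => ?_
  simp [hf, Fintype.card_perm]

lemma coeff_zero {n q : ℕ} {u : (Fin q → Fin n) → ℂ} (hu : IsCoeff u) (M : Fin q → Fin n)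
    (hM : ¬ Function.Injective M) : u M = 0 := by
  rw [Function.Injective] at hM
  push Not at hM
  obtain ⟨a, b, hab, hne⟩ := hM
  have h := hu (swap a b) M
  have : M ∘ swap a b = M := by
    funext i
    simp only [Function.comp, swap_apply_def]
    split_ifs with h1 h2
    · rw [h1, hab]
    · rw [h2, hab]
    · rfl
  rw [this, Perm.sign_swap hne] at h
  simp at h
  exact self_eq_neg.mp h

lemma sum_cons {n q : ℕ} (f : (Fin (q + 1) → Fin n) → ℂ) :
    ∑ I, f I = ∑ M : Fin q → Fin n, ∑ k : Fin n, f (Fin.cons k M) := by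
  rw [Finset.sum_comm, ← Fintype.sum_prod_type',
    ← (Fin.consEquiv (fun _ : Fin (q + 1) => Fin n)).sum_comp]
  rfl

lemma ss {q : ℕ} (σ : Perm (Fin q)) :
    ((Perm.sign σ : ℤ) : ℂ) * ((Perm.sign σ : ℤ) : ℂ) = 1 := by
  rcases Int.units_eq_one_or (Perm.sign σ) with h | h <;> simp [h]

lemma star_sign {q : ℕ} (σ : Perm (Fin q)) :
    star ((Perm.sign σ : ℤ) : ℂ) = ((Perm.sign σ : ℤ) : ℂ) := by
  simp

lemma permSign_comp_right {n p : ℕ} (I J : Fin p → Fin n) (τ : Perm (Fin p)) :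
    permSign I (J ∘ τ) = (Perm.sign τ : ℤ) * permSign I J := by
  rw [permSign_eq, permSign_eq, Finset.mul_sum, ← Equiv.sum_comp (Equiv.mulRight τ)]
  refine Finset.sum_congr rfl fun π _ => ?_
  have : (J ∘ τ = I ∘ ((Equiv.mulRight τ) π)) ↔ J = I ∘ π := by
    constructor
    · intro h
      funext i
      have := congrFun h (τ.symm i)
      simpa using this
    · intro h
      rw [h]; rfl
  simp only [this]
  split_ifs <;> simp [mul_comm]

/-- inner sum -/
lemma inner_sum {n q : ℕ} (v : Fin n → (Fin q → Fin n) → ℂ) (hv : ∀ k, IsCoeff (v k))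
    (w : (Fin (q + 1) → Fin n) → ℂ) (hw : w = fun I => v (I 0) (Fin.tail I))
    (I : Fin (q + 1) → Fin n) :
    ∑ N ∈ Incr n q, ∑ l : Fin n, ((permSign I (Fin.cons l N) : ℤ) : ℂ) * star (v l N)
      = star (w I) - ∑ j : Fin q, star (w (I ∘ swap 0 j.succ)) := by
  have hfac : (q.factorial : ℂ) ≠ 0 := by exact_mod_cast q.factorial_ne_zero
  apply mul_left_cancel₀ hfac
  have hext : ∀ (σ : Perm (Fin q)) I, w (I ∘ ext0 σ) = ((Perm.sign σ : ℤ) : ℂ) * w I := by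
    intro σ I
    rw [hw]
    simp only [tail_comp, Function.comp, ext0_zero]
    exact hv _ σ _
  rw [← sum_all (fun N => ∑ l : Fin n, ((permSign I (Fin.cons l N) : ℤ) : ℂ) * star (v l N))]
  · have h1 : ∑ M : Fin q → Fin n, ∑ l, ((permSign I (Fin.cons l M) : ℤ) : ℂ) * star (v l M)
        = ∑ J, ((permSign I J : ℤ) : ℂ) * star (w J) := by
      rw [sum_cons, hw]; simp
    rw [h1]
    have h2 : ∑ J, ((permSign I J : ℤ) : ℂ) * star (w J)
        = ∑ π : Perm (Fin (q + 1)), ((Perm.sign π : ℤ) : ℂ) * star (w (I ∘ π)) := by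
      simp only [permSign_eq, Int.cast_sum, Finset.sum_mul]
      rw [Finset.sum_comm]
      refine Finset.sum_congr rfl fun π _ => ?_
      simp [ite_mul]
    rw [h2, ← Perm.decomposeFin.symm.sum_comp, Fintype.sum_prod_type]
    have h3 : ∀ (p : Fin (q + 1)) (e : Perm (Fin q)),
        ((Perm.sign (Perm.decomposeFin.symm (p, e)) : ℤ) : ℂ)
          * star (w (I ∘ (Perm.decomposeFin.symm (p, e))))
        = (if p = 0 then 1 else -1) * star (w (I ∘ swap 0 p)) := by
      intro p e
      rw [Perm.decomposeFin.symm_sign, decomp, Perm.coe_mul, ← Function.comp_assoc, hext,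
        star_mul', star_sign]
      have := ss e
      split_ifs
      · push_cast
        linear_combination star (w (I ∘ swap 0 p)) * this
      · push_cast
        linear_combination -star (w (I ∘ swap 0 p)) * this
    simp only [h3]
    simp only [Finset.sum_const, Finset.card_univ, Fintype.card_perm, Fintype.card_fin,
      nsmul_eq_mul, ← Finset.mul_sum]
    rw [Fin.sum_univ_succ]
    simp [sub_eq_add_neg]
  · intro σ M
    refine Finset.sum_congr rfl fun l _ => ?_
    rw [cons_comp, permSign_comp_right, hv, star_mul', star_sign, ext0_sign]
    push_cast
    linear_combination (((permSign I (Fin.cons l M) : ℤ) : ℂ) * star (v l M)) * ss σ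
  · intro M hM
    simp [coeff_zero (hv _) M hM]


theorem aux_identity (n q : ℕ) (hn : 1 ≤ n) (hq1 : 1 ≤ q) (hqn : q ≤ n)
    (v : Fin n → (Fin q → Fin n) → ℂ)
    (hv : ∀ k, HM.IsCoeff (v k)) :
    ∑ M ∈ HM.Incr n q, ∑ N ∈ HM.Incr n q, ∑ k : Fin n, ∑ l : Fin n,
        ((HM.permSign (HM.cons' (q + 1) k M) (HM.cons' (q + 1) l N) : ℤ) : ℂ)
          * v k M * star (v l N)
      = ((∑ M ∈ HM.Incr n q, ∑ k : Fin n, ‖v k M‖ ^ 2 : ℝ) : ℂ)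
        - ∑ J ∈ HM.Incr n (q - 1), ∑ k : Fin n, ∑ l : Fin n,
            v k (HM.cons' q l J) * star (v l (HM.cons' q k J)) := by
  obtain ⟨p, rfl⟩ : ∃ p, q = p + 1 := ⟨q - 1, by omega⟩
  simp only [cons'_eq]
  obtain ⟨w, hw⟩ : ∃ w : (Fin (p + 1 + 1) → Fin n) → ℂ, w = fun I => v (I 0) (Fin.tail I) :=
    ⟨_, rfl⟩
  have hwc : ∀ k M, v k M = w (Fin.cons k M) := by intro k M; simp [hw]
  have hext : ∀ (σ : Perm (Fin (p + 1))) I,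
      w (I ∘ ext0 σ) = ((Perm.sign σ : ℤ) : ℂ) * w I := by
    intro σ I
    rw [hw]
    simp only [tail_comp, Function.comp, ext0_zero]
    exact hv _ σ _
  have hL : ∑ M ∈ HM.Incr n (p + 1), ∑ N ∈ HM.Incr n (p + 1), ∑ k : Fin n, ∑ l : Fin n,
        ((HM.permSign (Fin.cons k M : Fin (p + 1 + 1) → Fin n) (Fin.cons l N) : ℤ) : ℂ)
          * v k M * star (v l N)
      = ∑ M ∈ HM.Incr n (p + 1), ∑ k : Fin n, (v k M * star (v k M)
        - ∑ j : Fin (p + 1), v k M *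
          star (w ((Fin.cons k M : Fin (p + 1 + 1) → Fin n) ∘ swap 0 j.succ))) := by
    refine Finset.sum_congr rfl fun M _ => ?_
    rw [Finset.sum_comm]
    refine Finset.sum_congr rfl fun k _ => ?_
    have := inner_sum v hv w hw (Fin.cons k M)
    rw [← hwc] at this
    rw [← Finset.mul_sum, ← mul_sub, ← this, Finset.mul_sum]
    refine Finset.sum_congr rfl fun N _ => ?_
    rw [Finset.mul_sum]
    refine Finset.sum_congr rfl fun l _ => ?_
    ring
  rw [hL]
  simp only [Finset.sum_sub_distrib]
  congr 1
  · push_cast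
    refine Finset.sum_congr rfl fun M _ => Finset.sum_congr rfl fun k _ => ?_
    exact Complex.mul_conj' _
  · have hfac : ((p + 1).factorial : ℂ) ≠ 0 := by exact_mod_cast (p + 1).factorial_ne_zero
    -- symmetric in j
    have hj : ∀ j : Fin (p + 1), ∑ I, w I * star (w (I ∘ swap 0 j.succ))
        = ∑ I, w I * star (w (I ∘ swap 0 (Fin.succ 0))) := by
      intro j
      rw [← (Equiv.arrowCongr (ext0 (swap 0 j)) (Equiv.refl (Fin n))).sum_comp]
      refine Finset.sum_congr rfl fun I _ => ?_
      have e1 : (Equiv.arrowCongr (ext0 (swap 0 j)) (Equiv.refl (Fin n))) I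
          = I ∘ ext0 (swap 0 j) := by
        have : (ext0 (swap (0 : Fin (p + 1)) j)).symm = ext0 (swap 0 j) := by
          rw [Equiv.symm_eq_iff_trans_eq_refl] <;> ext i <;> refine Fin.cases ?_ (fun i => ?_) i <;>
            simp [ext0_zero, ext0_succ]
        funext i
        simp [Equiv.arrowCongr, this]
      have e2 : (I ∘ ext0 (swap 0 j)) ∘ swap 0 j.succ
          = (I ∘ swap 0 (Fin.succ 0)) ∘ ext0 (swap 0 j) := by
        have : ext0 (swap 0 j) * swap 0 j.succ = swap 0 (Fin.succ 0) * ext0 (swap 0 j) := by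
          rw [Equiv.mul_swap_eq_swap_mul, ext0_zero, ext0_succ, swap_apply_right]
        funext i
        exact congrArg I (congrArg (fun f => f i) this)
      rw [e1, e2, hext, hext, star_mul', star_sign]
      linear_combination (w I * star (w (I ∘ swap 0 (Fin.succ 0)))) * ss (swap 0 j)
    apply mul_left_cancel₀ hfac
    rw [← sum_all (fun M => ∑ k : Fin n, ∑ j : Fin (p + 1), v k M *
          star (w ((Fin.cons k M : Fin (p + 1 + 1) → Fin n) ∘ swap 0 j.succ)))]
    · simp only [hwc]
      rw [← sum_cons (fun I => ∑ j : Fin (p + 1), w I * star (w (I ∘ swap 0 j.succ))),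
        Finset.sum_comm]
      simp only [hj]
      rw [Nat.factorial_succ]
      simp only [Finset.sum_const, Finset.card_univ, Fintype.card_fin, nsmul_eq_mul]
      push_cast
      rw [mul_assoc]
      congr 1
      simp only [← hwc]
      refine Eq.trans ?_ (sum_all (fun J : Fin p → Fin n => ∑ k : Fin n, ∑ l : Fin n,
            v k (Fin.cons l J) * star (v l (Fin.cons k J))) ?_ ?_)
      · rw [sum_cons, sum_cons]
        refine Finset.sum_congr rfl fun J _ => ?_
        rw [Finset.sum_comm]
        refine Finset.sum_congr rfl fun k _ => Finset.sum_congr rfl fun l _ => ?_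
        rw [hwc, hwc]
        congr 3
        funext i
        refine Fin.cases ?_ (fun i => Fin.cases ?_ (fun i => ?_) i) i
        · simp
        · simp
        · have : swap (0 : Fin (p + 1 + 1)) (Fin.succ 0) i.succ.succ = i.succ.succ :=
            swap_apply_of_ne_of_ne (Fin.succ_ne_zero _)
              (fun h => Fin.succ_ne_zero _ (Fin.succ_injective _ h))
          simp only [Function.comp, this, Fin.cons_succ]
      · intro σ J
        refine Finset.sum_congr rfl fun k _ => Finset.sum_congr rfl fun l _ => ?_
        rw [cons_comp, cons_comp, hv, hv, ext0_sign, star_mul', star_sign]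
        linear_combination (v k (Fin.cons l J) * star (v l (Fin.cons k J))) * ss σ
      · intro J hJ
        refine Finset.sum_eq_zero fun k _ => Finset.sum_eq_zero fun l _ => ?_
        rw [coeff_zero (hv k) (Fin.cons l J), zero_mul]
        intro h
        apply hJ
        intro a b hab
        exact Fin.succ_injective _ (h (by simpa using hab))
    · intro σ M
      refine Finset.sum_congr rfl fun k _ => ?_
      rw [cons_comp, hv, ← Equiv.sum_comp σ (fun j : Fin (p + 1) => v k M *
          star (w ((Fin.cons k M : Fin (p + 1 + 1) → Fin n) ∘ swap 0 j.succ)))]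
      refine Finset.sum_congr rfl fun j _ => ?_
      generalize (Fin.cons k M : Fin (p + 1 + 1) → Fin n) = I
      have e2 : (I ∘ ext0 σ) ∘ swap 0 j.succ
          = (I ∘ swap 0 (σ j).succ) ∘ ext0 σ := by
        have : ext0 σ * swap 0 j.succ = swap 0 (σ j).succ * ext0 σ := by
          rw [Equiv.mul_swap_eq_swap_mul, ext0_zero, ext0_succ]
        funext i
        exact congrArg I (congrArg (fun f => f i) this)
      rw [e2, hext, star_mul', star_sign]
      linear_combination (v k M * star (w (I ∘ swap 0 (σ j).succ))) * ss σ
    · intro M hM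
      simp [fun k => coeff_zero (hv k) M hM]

end HMaux

/-- the algebraic rearrangement identity
`Σ' Σ' Σ σ^{kM}_{lN} v_{k,M} conj(v_{l,N}) = Σ' Σ |v_{k,M}|² − Σ' Σ v_{k,lJ} conj(v_{l,kJ})`. -/
theorem sign_rearrangement_identity (n q : ℕ) (hn : 1 ≤ n) (hq1 : 1 ≤ q) (hqn : q ≤ n)
    (v : Fin n → (Fin q → Fin n) → ℂ)
    (hv : ∀ k, HM.IsCoeff (v k)) :
    ∑ M ∈ HM.Incr n q, ∑ N ∈ HM.Incr n q, ∑ k : Fin n, ∑ l : Fin n,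
        ((HM.permSign (HM.cons' (q + 1) k M) (HM.cons' (q + 1) l N) : ℤ) : ℂ)
          * v k M * star (v l N)
      = ((∑ M ∈ HM.Incr n q, ∑ k : Fin n, ‖v k M‖ ^ 2 : ℝ) : ℂ)
        - ∑ J ∈ HM.Incr n (q - 1), ∑ k : Fin n, ∑ l : Fin n,
            v k (HM.cons' q l J) * star (v l (HM.cons' q k J)) := by
  exact HMaux.aux_identity n q hn hq1 hqn v hv
end
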